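/- arXiv:solv-int/9812001 — 2 statements merged into one kernel-verified Lean document; each statement's English description precedes it below -/
import Mathlib

section
/- Lax representation for the dual system in cartesian coordinates (with time change). Let x ≠ 0, H̃ = 4·p_x·p_y/x, and for λ ∈ ℝ define L̃(λ) = [[p_x + (2λ − x)p_y, λ² − λx + (x² − 2y)/4], [−4p_y² + H̃, −(p_x + (2λ − x)p_y)]] and Ã = (1/x)·[[0,1],[0,0]]. Then for every λ and every matrix entry (i,j), {H̃, L̃(λ)_{ij}} = ([Ã, L̃(λ)])_{ij}. -/
/-- The canonical Poisson bracket of two functions of `(x, y, pₓ, p_y)` on `ℝ⁴`: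
`{F,G} = ∂F/∂pₓ·∂G/∂x − ∂F/∂x·∂G/∂pₓ + ∂F/∂p_y·∂G/∂y − ∂F/∂y·∂G/∂p_y`. -/
noncomputable def pb (F G : ℝ → ℝ → ℝ → ℝ → ℝ) (x y px py : ℝ) : ℝ :=
    deriv (fun s => F x y s py) px * deriv (fun s => G s y px py) x
  - deriv (fun s => F s y px py) x * deriv (fun s => G x y s py) px
  + deriv (fun s => F x y px s) py * deriv (fun s => G x s px py) y
  - deriv (fun s => F x s px py) y * deriv (fun s => G x y px s) py

/-- The dual Hamiltonian `H̃ = 4pₓp_y/x` obtained by the non-canonical change of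
the time variable from the cartesian free system. -/
noncomputable def Ham : ℝ → ℝ → ℝ → ℝ → ℝ := fun x _ px py => 4 * px * py / x

/-- The dual Lax matrix in cartesian coordinates: the cartesian Lax matrix with
`H̃` added to the lower-left entry. -/
noncomputable def L (lam x y px py : ℝ) : Matrix (Fin 2) (Fin 2) ℝ :=
  !![px + (2 * lam - x) * py, lam ^ 2 - lam * x + (x ^ 2 - 2 * y) / 4;
     -(4 * py ^ 2) + Ham x y px py, -(px + (2 * lam - x) * py)]

/-- The constant part of the second Lax matrix; the second Lax matrix is
`Ã = (1/x) • A`. -/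
noncomputable def A : Matrix (Fin 2) (Fin 2) ℝ := !![0, 1; 0, 0]

theorem dH_px (x px py : ℝ) : deriv (fun s : ℝ => 4 * s * py / x) px = 4 * py / x := by
  have h := (((hasDerivAt_id' px).const_mul 4).mul_const py).div_const x
  rw [h.deriv]; ring

theorem dH_py (x px py : ℝ) : deriv (fun s : ℝ => 4 * px * s / x) py = 4 * px / x := by
  have h := ((hasDerivAt_id' py).const_mul (4 * px)).div_const x
  rw [h.deriv]; ring

theorem hdH_x (x px py : ℝ) (hx : x ≠ 0) :
    HasDerivAt (fun s : ℝ => 4 * px * py / s) (-(4 * px * py) / x ^ 2) x := by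
  have h := (hasDerivAt_const x (4 * px * py)).div (hasDerivAt_id' x) hx
  exact h.congr_deriv (by ring)

theorem dB_x (lam x y : ℝ) :
    deriv (fun s : ℝ => lam ^ 2 - lam * s + (s ^ 2 - 2 * y) / 4) x = - lam + x / 2 := by
  have h := (((hasDerivAt_id' x).const_mul lam).const_sub (lam ^ 2)).add
    ((((hasDerivAt_id' x).pow 2).sub_const (2 * y)).div_const 4)
  refine (HasDerivAt.congr_deriv h ?_).deriv
  norm_num; ring

theorem dB_y (lam x y : ℝ) :
    deriv (fun s : ℝ => lam ^ 2 - lam * x + (x ^ 2 - 2 * s) / 4) y = - 1 / 2 := by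
  have h := ((((hasDerivAt_id' y).const_mul 2).const_sub (x ^ 2)).div_const 4).const_add
    (lam ^ 2 - lam * x)
  refine (HasDerivAt.congr_deriv h ?_).deriv
  norm_num

theorem dA_x (lam x px py : ℝ) :
    deriv (fun s : ℝ => px + (2 * lam - s) * py) x = - py := by
  have h := (((hasDerivAt_id' x).const_sub (2 * lam)).mul_const py).const_add px
  refine (HasDerivAt.congr_deriv h ?_).deriv
  ring

theorem dA_px (c px : ℝ) : deriv (fun s : ℝ => s + c) px = 1 := by
  simp

theorem dC_x (x px py : ℝ) (hx : x ≠ 0) :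
    deriv (fun s : ℝ => -(4 * py ^ 2) + 4 * px * py / s) x = -(4 * px * py) / x ^ 2 :=
  ((hdH_x x px py hx).const_add _).deriv

theorem dC_px (x px py : ℝ) :
    deriv (fun s : ℝ => -(4 * py ^ 2) + 4 * s * py / x) px = 4 * py / x := by
  rw [deriv_const_add, dH_px]

theorem dnA_x (lam x px py : ℝ) :
    deriv (fun s : ℝ => -(px + (2 * lam - s) * py)) x = py := by
  rw [deriv.fun_neg, dA_x, neg_neg]

theorem dnA_px (c px : ℝ) : deriv (fun s : ℝ => -(s + c)) px = -1 := by
  rw [deriv.fun_neg, dA_px]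

/-- Lax representation for the dual system in cartesian coordinates (with time
change): the Lax equation `{H̃, L̃(λ)} = [(1/x) • A, L̃(λ)]` holds entrywise for
`x ≠ 0`. -/
theorem lax_dual_cartesian :
    ∀ (lam x y px py : ℝ), x ≠ 0 → ∀ (i j : Fin 2),
      pb Ham (fun x y px py => L lam x y px py i j) x y px py =
        (((1 / x) • A) * L lam x y px py - L lam x y px py * ((1 / x) • A)) i j := by
  intro lam x y px py hx i j
  fin_cases i <;> fin_cases j
  · simp [pb, Ham, L, A, -deriv_div_const, -deriv_fun_add, dH_px, dH_py, (hdH_x x px py hx).deriv, dA_x, dA_px]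
    field_simp
    try ring
  · simp only [pb, Ham, L, A]
    simp [-deriv_div_const, -deriv_fun_add, dH_px, dH_py, (hdH_x x px py hx).deriv, dB_x, dB_y]
    field_simp
    try ring
  · simp [pb, Ham, L, A, -deriv_div_const, -deriv_fun_add, dH_px, dH_py, (hdH_x x px py hx).deriv, dC_x x px py hx, dC_px]
    try ring
  · simp [pb, Ham, L, A, -neg_add_rev, -deriv_div_const, -deriv_fun_add, dH_px, dH_py, (hdH_x x px py hx).deriv, dnA_x, dnA_px]
    field_simp
    try ring
end

section
/- Spectral curve and commuting integrals for the dual cartesian system. Let x ≠ 0, H̃ = 4·p_x·p_y/x, J̃ = p_x² − 2x·p_x·p_y + 2y·p_y² + ((x² − 2y)/4)·H̃, and let L̃(λ) = [[p_x + (2λ − x)p_y, λ² − λx + (x² − 2y)/4], [−4p_y² + H̃, −(p_x + (2λ − x)p_y)]]. Then for every λ ∈ ℝ, −det L̃(λ) = H̃·λ² + J̃; moreover {H̃, J̃} = 0. -/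
/-- The dual second integral `J̃ = pₓ² − 2x pₓ p_y + 2y p_y² + ((x² − 2y)/4)·H̃`. -/
noncomputable def J : ℝ → ℝ → ℝ → ℝ → ℝ := fun x y px py =>
  px ^ 2 - 2 * x * px * py + 2 * y * py ^ 2 + ((x ^ 2 - 2 * y) / 4) * Ham x y px py

/-- Spectral curve and commuting integrals for the dual cartesian system:
`−det L̃(λ) = H̃λ² + J̃` for `x ≠ 0`, and `{H̃, J̃} = 0`. -/
theorem spectral_curve_dual_cartesian :
    (∀ lam x y px py : ℝ, x ≠ 0 →
      -(L lam x y px py).det = Ham x y px py * lam ^ 2 + J x y px py) ∧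
    (∀ x y px py : ℝ, x ≠ 0 → pb Ham J x y px py = 0) := by
  constructor
  · intro lam x y px py hx
    simp only [L, J, Ham, Matrix.det_fin_two_of]
    field_simp
    ring
  · intro x y px py hx
    have i1 : ∀ t : ℝ, HasDerivAt (fun s : ℝ => s) 1 t := fun t => hasDerivAt_id t
    have h1 : HasDerivAt (fun s => Ham x y s py) (4 * py / x) px := by
      unfold Ham
      refine ((((i1 px).const_mul 4).mul_const py).div_const x).congr_deriv ?_
      ring
    have h2 : HasDerivAt (fun s => Ham s y px py) (-(4 * px * py) / x ^ 2) x := by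
      unfold Ham
      refine ((hasDerivAt_const x (4 * px * py)).div (i1 x) hx).congr_deriv ?_
      ring
    have h3 : HasDerivAt (fun s => Ham x y px s) (4 * px / x) py := by
      unfold Ham
      refine (((i1 py).const_mul (4 * px)).div_const x).congr_deriv ?_
      ring
    have h4 : HasDerivAt (fun s => Ham x s px py) 0 y := by
      unfold Ham
      exact hasDerivAt_const y _
    have g1 : HasDerivAt (fun s => J x y s py)
        (2 * px - 2 * x * py + (x ^ 2 - 2 * y) / 4 * (4 * py / x)) px := by
      unfold J
      refine ((((((i1 px).pow 2).sub (((i1 px).const_mul (2 * x)).mul_const py)).add_const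
        (2 * y * py ^ 2)).add (h1.const_mul ((x ^ 2 - 2 * y) / 4)))).congr_deriv ?_
      simp
    have g2 : HasDerivAt (fun s => J s y px py)
        (-(2 * px * py) + (2 * x / 4 * Ham x y px py
          + (x ^ 2 - 2 * y) / 4 * (-(4 * px * py) / x ^ 2))) x := by
      unfold J
      refine ((((((i1 x).const_mul 2).mul_const px).mul_const py).const_sub (px ^ 2)).add_const
        (2 * y * py ^ 2) |>.add
        (((((i1 x).pow 2).sub_const (2 * y)).div_const 4).mul h2)).congr_deriv ?_
      simp
    have g3 : HasDerivAt (fun s => J x y px s)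
        (-(2 * x * px) + 2 * y * (2 * py) + (x ^ 2 - 2 * y) / 4 * (4 * px / x)) py := by
      unfold J
      refine (((((i1 py).const_mul (2 * x * px)).const_sub (px ^ 2)).add
        (((i1 py).pow 2).const_mul (2 * y))).add
        (h3.const_mul ((x ^ 2 - 2 * y) / 4))).congr_deriv ?_
      simp
    have g4 : HasDerivAt (fun s => J x s px py)
        (2 * py ^ 2 + (-2 / 4) * Ham x y px py) y := by
      unfold J
      refine (((((i1 y).const_mul 2).mul_const (py ^ 2)).const_add
        (px ^ 2 - 2 * x * px * py)).add
        (((((i1 y).const_mul 2).const_sub (x ^ 2)).div_const 4).mul h4)).congr_deriv ?_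
      simp
    unfold pb
    rw [h1.deriv, h2.deriv, h3.deriv, h4.deriv, g1.deriv, g2.deriv, g3.deriv, g4.deriv]
    simp only [Ham]
    field_simp
    ring
end
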